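/- arXiv:1506.01873 — 6 statements merged into one kernel-verified Lean document; each statement's English description precedes it below -/
import Mathlib

section
/- Let 𝐯 = v₁…vₙ be a word over VΓ with n ≥ 2 and let 𝒱 = {(e₁,z₁),…,(e_r,z_r)} ∈ 𝒫₂(𝐯) be a Γ-admissible pair partition. Then there exists an index m ∈ {1,…,r} such that for every a with e_m < a < z_m one has (v_{e_m}, v_a) ∈ EΓ. -/
/-- Let `𝐯 = v₁…vₙ` be a word (with `n ≥ 2`) over the vertices of a
simplicial graph `Γ` and let `𝒱 ∈ 𝒫₂(𝐯)` be a `Γ`-admissible pair partition (encoded by a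
fixed-point-free involution `f` of `Fin n`, pairing `k` with `f k`, with `v (f k) = v k`;
`Γ`-admissibility says that `I_Γ(𝒱)` is empty, i.e. whenever `k < l < f k < f l` the letters
`v k` and `v l` are adjacent).  Then there is a pair `(m, f m)` with `m < f m` such that every
letter strictly between the legs of that pair is adjacent to `v m`. -/
theorem stmt_3 {V : Type*} (Γ : SimpleGraph V)
    {n : ℕ} (hn : 2 ≤ n) (v : Fin n → V)
    (f : Fin n → Fin n) (hinv : Function.Involutive f)
    (hfix : ∀ k, f k ≠ k) (hlet : ∀ k, v (f k) = v k)
    (hadm : ∀ k l : Fin n, k < l → l < f k → f k < f l → Γ.Adj (v k) (v l)) :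
    ∃ m : Fin n, m < f m ∧ ∀ a : Fin n, m < a → a < f m → Γ.Adj (v m) (v a) := by
  have key : ∃ m : Fin n, m < f m := by
    have h0 := hfix ⟨0, by omega⟩
    refine ⟨⟨0, by omega⟩, ?_⟩
    rw [Fin.lt_def]
    have : (f ⟨0, by omega⟩).val ≠ 0 := fun h => h0 (Fin.ext h)
    simp only
    omega
  obtain ⟨m0, hm0⟩ := key
  obtain ⟨m, hm, hmin⟩ := Finset.exists_min_image
    (Finset.univ.filter fun m : Fin n => m < f m) (fun m => (f m).val - m.val)
    ⟨m0, by simpa using hm0⟩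
  simp only [Finset.mem_filter, Finset.mem_univ, true_and] at hm hmin
  refine ⟨m, hm, fun a h1 h2 => ?_⟩
  have hfa : f (f a) = a := hinv a
  have hne1 : f a ≠ m := fun h => by
    rw [← h, hfa] at h2
    exact lt_irrefl _ h2
  have hne2 : f a ≠ f m := fun h => by
    rw [hinv.injective h] at h1
    exact lt_irrefl _ h1
  have hneA := hfix a
  rcases lt_or_gt_of_ne hne2 with h3 | h3
  · rcases lt_or_gt_of_ne hne1 with h4 | h4
    · have := hadm (f a) m h4 (by rw [hfa]; exact h1) (by rw [hfa]; exact h2)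
      rw [hlet] at this
      exact this.symm
    · exfalso
      rcases lt_or_gt_of_ne hneA with h5 | h5
      · have := hmin (f a) (by rw [hfa]; exact h5)
        rw [hfa] at this
        simp only [Fin.lt_def] at *
        omega
      · have := hmin a h5
        simp only [Fin.lt_def] at *
        omega
  · exact hadm m a h1 h2 h3
end

section
/- Let 𝐯 = v₁…vₙ be a word over VΓ, let 𝒱 ∈ 𝒫(𝐯) be a partition having at least one block consisting of a single element, and let (i₁,…,iₙ) be a tuple of indices of class 𝒱. Then φ(b_{i₁,v₁} b_{i₂,v₂} ⋯ b_{iₙ,vₙ}) = 0. -/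
theorem aux_perm {ι A : Type*} [Ring A] [Algebra ℂ A] (f : ι → A)
    (h : ∀ x y, ∃ a : ℂ, f x * f y = a • (f y * f x)) {L M : List ι} (hp : L.Perm M) :
    ∃ a : ℂ, (L.map f).prod = a • (M.map f).prod := by
  induction hp with
  | nil => exact ⟨1, by simp⟩
  | cons x _ ih =>
    obtain ⟨a, ha⟩ := ih
    exact ⟨a, by simp [ha]⟩
  | swap x y l =>
    obtain ⟨a, ha⟩ := h y x
    refine ⟨a, ?_⟩
    simp only [List.map_cons, List.prod_cons, ← mul_assoc, ha, smul_mul_assoc]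
  | trans _ _ ih1 ih2 =>
    obtain ⟨a, ha⟩ := ih1
    obtain ⟨a', ha'⟩ := ih2
    exact ⟨a * a', by rw [ha, ha', mul_smul]⟩

theorem aux_group {ι : Type*} [DecidableEq ι] (L : List ι) :
    L.Perm (L.dedup.flatMap fun x => List.replicate (L.count x) x) := by
  have key : ∀ (d : List ι) (m : ι → ℕ) (a : ι), d.Nodup →
      (d.flatMap fun x => List.replicate (m x) x).count a = if a ∈ d then m a else 0 := by
    intro d m a hd
    induction d with
    | nil => simp
    | cons x d ih =>
      rw [List.nodup_cons] at hd
      rw [List.flatMap_cons, List.count_append, ih hd.2, List.count_replicate]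
      by_cases hx : x = a
      · subst hx
        simp [hd.1]
      · simp [hx, Ne.symm hx]
  rw [List.perm_iff_count]
  intro a
  rw [key _ _ _ (List.nodup_dedup L)]
  by_cases ha : a ∈ L
  · simp [ha]
  · simp [ha, List.count_eq_zero_of_not_mem ha]

theorem aux_prod {ι A : Type*} [Monoid A] (f : ι → A) (m : ι → ℕ) (d : List ι) :
    ((d.flatMap fun x => List.replicate (m x) x).map f).prod
      = (d.map fun x => f x ^ m x).prod := by
  induction d with
  | nil => simp
  | cons x d ih => simp [ih]

/-- In the setting of a unital complex `*`-algebra `A`, a unital linear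
functional `φ`, self-adjoint elements `b i v` (`i ∈ ℕ`, `v` a vertex of a simplicial graph
`Γ`) satisfying the factorization property (1), mean zero and covariance one (2), and the
commutation relations (3) governed by a sign function `s` which is `1` on edges of `Γ`:
if `𝐯 = v₁…vₙ` is a word, `𝒱 ∈ 𝒫(𝐯)` is a partition (encoded by a surjection
`c : Fin n → Fin p` onto its blocks, letters constant on blocks) having a singleton block,
and `(i₁,…,iₙ)` is a tuple of indices of class `𝒱`, then
`φ(b_{i₁,v₁} ⋯ b_{iₙ,vₙ}) = 0`. -/
theorem stmt_4 {V : Type*} [DecidableEq V] (Γ : SimpleGraph V)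
    {A : Type*} [Ring A] [Algebra ℂ A] [StarRing A] [StarModule ℂ A]
    (φ : A →ₗ[ℂ] ℂ) (hφ1 : φ 1 = 1)
    (b : ℕ → V → A) (hsa : ∀ i w, star (b i w) = b i w)
    (h1 : ∀ (k : ℕ) (idx : Fin k → ℕ × V), Function.Injective idx →
        ∀ l : Fin k → ℕ,
          φ (List.ofFn fun j => b (idx j).1 (idx j).2 ^ l j).prod
            = ∏ j, φ (b (idx j).1 (idx j).2 ^ l j))
    (h2 : ∀ i w, φ (b i w) = 0) (h2' : ∀ i w, φ (b i w ^ 2) = 1)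
    (s : ℕ → V → ℕ → V → ℂ)
    (hs : ∀ i w j u, s i w j u = 1 ∨ s i w j u = -1)
    (hsadj : ∀ i w j u, Γ.Adj w u → s i w j u = 1)
    (h3 : ∀ i w j u, b i w * b j u = s i w j u • (b j u * b i w))
    {n p : ℕ} (v : Fin n → V) (c : Fin n → Fin p)
    (hsurj : Function.Surjective c)
    (hletter : ∀ k l, c k = c l → v k = v l)
    (hsingleton : ∃ bl : Fin p, ∃! k, c k = bl)
    (i : Fin n → ℕ)
    (hclass : ∀ k l, (i k = i l ∧ v k = v l) ↔ c k = c l) :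
    φ (List.ofFn fun k => b (i k) (v k)).prod = 0 := by
  classical
  obtain ⟨bl, k0, hk0, huniq⟩ := hsingleton
  let f : ℕ × V → A := fun x => b x.1 x.2
  let g : Fin n → ℕ × V := fun k => (i k, v k)
  let L : List (ℕ × V) := List.ofFn g
  have hL : (List.ofFn fun k => b (i k) (v k)) = L.map f := by
    simp only [L, List.map_ofFn]
    rfl
  let cnt : ℕ × V → ℕ := fun x => @List.count _ instBEqOfDecidableEq x L
  have hcount : cnt (g k0) = 1 := by
    have hmem : g k0 ∈ L := by simp [L]
    apply le_antisymm _ (@List.count_pos_iff _ instBEqOfDecidableEq _ _ _ |>.2 hmem)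
    by_contra! hlt
    have hdup : List.Duplicate (g k0) L := List.duplicate_iff_two_le_count.2 hlt
    rw [List.duplicate_iff_exists_distinct_get] at hdup
    obtain ⟨x, y, hxy, hx, hy⟩ := hdup
    simp only [L, List.get_ofFn, g, Prod.mk.injEq] at hx hy
    have ex := huniq _ (((hclass _ _).1 ⟨hx.1.symm, hx.2.symm⟩).trans hk0)
    have ey := huniq _ (((hclass _ _).1 ⟨hy.1.symm, hy.2.symm⟩).trans hk0)
    have := ex.trans ey.symm
    simp [Fin.ext_iff] at this
    exact absurd hxy (by simp [Fin.lt_def, this])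
  have hperm : L.Perm (L.dedup.flatMap fun x => List.replicate (cnt x) x) := aux_group L
  obtain ⟨a, ha⟩ := aux_perm f (fun x y => ⟨_, h3 x.1 x.2 y.1 y.2⟩) hperm
  rw [hL, ha, aux_prod, map_smul]
  have hd : (L.dedup.map fun x => f x ^ cnt x)
      = List.ofFn fun j : Fin L.dedup.length =>
        b (L.dedup.get j).1 (L.dedup.get j).2 ^ cnt (L.dedup.get j) := by
    conv_lhs => rw [← List.ofFn_get L.dedup, List.map_ofFn]
    rfl
  rw [hd, h1 _ L.dedup.get (List.nodup_iff_injective_get.1 (List.nodup_dedup L))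
    (fun j => cnt (L.dedup.get j))]
  have hmem : g k0 ∈ L.dedup := by simp [L]
  obtain ⟨j, hj⟩ := List.mem_iff_get.1 hmem
  rw [Finset.prod_eq_zero (Finset.mem_univ j), smul_zero]
  rw [hj, hcount, pow_one, h2]
end

section
/- Let 𝐯 = v₁…vₙ be a word over VΓ with n = 2r even, let 𝒱 = {(e₁,z₁),…,(e_r,z_r)} ∈ 𝒫₂(𝐯) be a Γ-admissible pair partition, and let (i₁,…,iₙ) be a tuple of indices of class 𝒱. Then φ(b_{i₁,v₁} b_{i₂,v₂} ⋯ b_{iₙ,vₙ}) = 1. -/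
theorem aux_move {X A : Type*} [Ring A] [Algebra ℂ A] (c : X → A) (σ : X → X → ℂ)
    (h3 : ∀ x y, c x * c y = σ x y • (c y * c x)) (x : X) (M : List X) :
    c x * (M.map c).prod = (M.map (σ x)).prod • ((M.map c).prod * c x) := by
  induction M with
  | nil => simp
  | cons y M ih =>
    simp only [List.map_cons, List.prod_cons]
    rw [← mul_assoc, h3, smul_mul_assoc, mul_assoc, ih, mul_smul_comm, smul_smul, mul_assoc]

theorem aux_sign {X : Type*} [DecidableEq X] (τ : X → ℂ) (hτ : ∀ y, τ y = 1 ∨ τ y = -1)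
    (M : List X) (hM : ∀ y ∈ M, τ y = 1 ∨ M.count y = 2) : (M.map τ).prod = 1 := by
  rw [Finset.prod_list_map_count]
  refine Finset.prod_eq_one fun y hy => ?_
  rcases hM y (by simpa using hy) with h | h
  · simp [h]
  · rw [h]; rcases hτ y with h | h <;> simp [h]

theorem aux_squares {X A : Type*} [DecidableEq X] [Ring A] [Algebra ℂ A] (c : X → A)
    (σ : X → X → ℂ) (hσ : ∀ x y, σ x y = 1 ∨ σ x y = -1)
    (h3 : ∀ x y, c x * c y = σ x y • (c y * c x)) (m : ℕ) :
    ∀ L : List X, L.length ≤ m → (∀ x ∈ L, L.count x = 2) →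
      (∀ x y, [x, y, x, y].Sublist L → σ x y = 1) →
      ∃ D : List X, D.Nodup ∧ (∀ x ∈ D, x ∈ L) ∧
        (L.map c).prod = (D.map fun x => c x ^ 2).prod := by
  induction m with
  | zero =>
    intro L hL _ _
    have : L = [] := by simpa using hL
    subst this
    exact ⟨[], by simp⟩
  | succ m ih =>
    intro L hL hc hs
    rcases L with _ | ⟨x, L⟩
    · exact ⟨[], by simp⟩
    have hx : L.count x = 1 := by
      have := hc x (by simp)
      simpa using this
    have hxL : x ∈ L := List.count_pos_iff.1 (by omega)
    obtain ⟨M, N, rfl⟩ := List.append_of_mem hxL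
    have hx0 : M.count x = 0 ∧ N.count x = 0 := by
      simp only [List.count_append, List.count_cons_self] at hx
      omega
    have hxM : x ∉ M := List.count_eq_zero.1 hx0.1
    have hxN : x ∉ N := List.count_eq_zero.1 hx0.2
    have hcy : ∀ y, y ∈ M ∨ y ∈ N → M.count y + N.count y = 2 := by
      intro y hy
      have hne : x ≠ y := by rintro rfl; tauto
      have := hc y (by simp; tauto)
      simpa [List.count_append, List.count_cons, hne] using this
    have hsign : (M.map (σ x)).prod = 1 := by
      refine aux_sign _ (hσ x) M fun y hy => ?_
      by_cases hyN : y ∈ N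
      · left
        apply hs
        have a1 : [y].Sublist M := List.singleton_sublist.2 hy
        have a2 : [y].Sublist N := List.singleton_sublist.2 hyN
        exact List.Sublist.cons_cons x (a1.append (List.Sublist.cons_cons x a2))
      · right
        have := hcy y (Or.inl hy)
        have := List.count_eq_zero.2 hyN
        omega
    have hmove := aux_move c σ h3 x M
    rw [hsign, one_smul] at hmove
    have hsub : (M ++ N).Sublist (x :: (M ++ x :: N)) :=
      List.Sublist.cons x ((List.Sublist.refl M).append (List.sublist_cons_self x N))
    obtain ⟨D, hD, hDm, hDp⟩ := ih (M ++ N) (by simp at hL ⊢; omega)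
      (fun y hy => by
        rw [List.count_append]
        exact hcy y (by simpa using hy))
      (fun y z h => hs y z (h.trans hsub))
    refine ⟨x :: D, List.nodup_cons.2 ⟨fun h => ?_, hD⟩, ?_, ?_⟩
    · have := hDm x h
      simp at this
      tauto
    · intro y hy
      rcases List.mem_cons.1 hy with rfl | hy
      · simp
      · exact hsub.subset (hDm y hy)
    · simp only [List.map_cons, List.prod_cons]
      rw [← hDp]
      simp only [List.map_cons, List.prod_cons, List.map_append, List.prod_append]
      rw [pow_two, mul_assoc (c x) (c x), ← mul_assoc (c x) _ (List.map c N).prod, hmove, mul_assoc]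

theorem aux_count {X : Type*} [DecidableEq X] {n : ℕ} (g : Fin n → X) (x : X) :
    (List.ofFn g).count x = (Finset.univ.filter fun l => g l = x).card := by
  rw [List.ofFn_eq_map, List.count, List.countP_map, List.countP_eq_length_filter]
  rw [← List.toFinset_card_of_nodup ((List.nodup_finRange n).filter _)]
  congr 1
  ext l
  simp

/-- In the setting of a unital complex `*`-algebra `A`, a unital linear
functional `φ`, self-adjoint elements `b i v` satisfying properties (1)–(3) of Theorem 3
(`Speicher type limit theorem`): if `𝐯 = v₁…vₙ` is a word, `𝒱 ∈ 𝒫₂(𝐯)` is a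
`Γ`-admissible pair partition (encoded by a fixed-point-free involution `f` of `Fin n` with
`v (f k) = v k`; admissibility: whenever `k < l < f k < f l` the letters `v k, v l` are
adjacent), and `(i₁,…,iₙ)` is a tuple of indices of class `𝒱`, then
`φ(b_{i₁,v₁} ⋯ b_{iₙ,vₙ}) = 1`. -/
theorem stmt_5 {V : Type*} [DecidableEq V] (Γ : SimpleGraph V)
    {A : Type*} [Ring A] [Algebra ℂ A] [StarRing A] [StarModule ℂ A]
    (φ : A →ₗ[ℂ] ℂ) (hφ1 : φ 1 = 1)
    (b : ℕ → V → A) (hsa : ∀ i w, star (b i w) = b i w)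
    (h1 : ∀ (k : ℕ) (idx : Fin k → ℕ × V), Function.Injective idx →
        ∀ l : Fin k → ℕ,
          φ (List.ofFn fun j => b (idx j).1 (idx j).2 ^ l j).prod
            = ∏ j, φ (b (idx j).1 (idx j).2 ^ l j))
    (h2 : ∀ i w, φ (b i w) = 0) (h2' : ∀ i w, φ (b i w ^ 2) = 1)
    (s : ℕ → V → ℕ → V → ℂ)
    (hs : ∀ i w j u, s i w j u = 1 ∨ s i w j u = -1)
    (hsadj : ∀ i w j u, Γ.Adj w u → s i w j u = 1)
    (h3 : ∀ i w j u, b i w * b j u = s i w j u • (b j u * b i w))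
    {n r : ℕ} (hn : n = 2 * r) (v : Fin n → V)
    (f : Fin n → Fin n) (hinv : Function.Involutive f)
    (hfix : ∀ k, f k ≠ k) (hlet : ∀ k, v (f k) = v k)
    (hadm : ∀ k l : Fin n, k < l → l < f k → f k < f l → Γ.Adj (v k) (v l))
    (i : Fin n → ℕ)
    (hclass : ∀ k l, (i k = i l ∧ v k = v l) ↔ (k = l ∨ f k = l)) :
    φ (List.ofFn fun k => b (i k) (v k)).prod = 1 := by
  classical
  let g : Fin n → ℕ × V := fun k => (i k, v k)
  have hg : ∀ k l, g k = g l ↔ (k = l ∨ f k = l) := fun k l => by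
    rw [← hclass]; simp [g]
  obtain ⟨D, hD, -, hp⟩ := aux_squares (fun x : ℕ × V => b x.1 x.2)
    (fun x y => s x.1 x.2 y.1 y.2) (fun x y => hs _ _ _ _) (fun x y => h3 _ _ _ _) n
    (List.ofFn g) (by simp)
    (by
      intro x hx
      obtain ⟨k, rfl⟩ := (List.mem_ofFn' _ _).1 hx
      have hcard : (Finset.univ.filter fun l => g l = g k) = {k, f k} := by
        ext l
        simp only [Finset.mem_filter, Finset.mem_univ, true_and, Finset.mem_insert,
          Finset.mem_singleton]
        rw [eq_comm, hg]
        tauto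
      have h2c : (Finset.univ.filter fun l => g l = g k).card = 2 := by
        rw [hcard, Finset.card_pair (hfix k).symm]
      rw [← h2c, aux_count])
    (by
      intro x y h
      obtain ⟨e, he⟩ := List.sublist_iff_exists_fin_orderEmbedding_get_eq.1 h
      let k : Fin 4 → Fin n := fun j => ⟨(e j).1, by simpa using (e j).2⟩
      have hk : ∀ a b : Fin 4, a < b → k a < k b := fun a b hab => by
        have := e.strictMono hab
        exact this
      have e0 : x = g (k 0) := by simpa [k] using he 0
      have e1 : y = g (k 1) := by simpa [k] using he 1
      have e2 : x = g (k 2) := by simpa [k] using he 2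
      have e3 : y = g (k 3) := by simpa [k] using he 3
      have l01 := hk 0 1 (by decide)
      have l12 := hk 1 2 (by decide)
      have l23 := hk 2 3 (by decide)
      have f0 : f (k 0) = k 2 :=
        ((hg _ _).1 (e0.symm.trans e2)).resolve_left (l01.trans l12).ne
      have f1 : f (k 1) = k 3 :=
        ((hg _ _).1 (e1.symm.trans e3)).resolve_left (l12.trans l23).ne
      have := hadm (k 0) (k 1) l01 (by rw [f0]; exact l12) (by rw [f0, f1]; exact l23)
      apply hsadj
      rw [e0, e1]
      exact this)
  have hL : (List.ofFn fun k => b (i k) (v k)) = (List.ofFn g).map (fun x => b x.1 x.2) := by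
    rw [List.map_ofFn]; rfl
  rw [hL, hp]
  have hh := h1 D.length D.get (List.nodup_iff_injective_get.1 hD) (fun _ => 2)
  have hDe : (D.map fun x => b x.1 x.2 ^ 2)
      = List.ofFn fun j => b (D.get j).1 (D.get j).2 ^ 2 := by
    conv_lhs => rw [← List.ofFn_get D]
    rw [List.map_ofFn]; rfl
  rw [hDe, hh]
  simp [h2']
end

section
/- Let 𝐯 = v₁…vₙ be a word over VΓ with n = 2r even, let 𝒱 = {(e₁,z₁),…,(e_r,z_r)} ∈ 𝒫₂(𝐯) be any pair partition, and let (i₁,…,iₙ) be a tuple of indices of class 𝒱. Then φ(b_{i₁,v₁} b_{i₂,v₂} ⋯ b_{iₙ,vₙ}) = ∏_{(a,b) ∈ I_Γ(𝒱)} s(i_{e_a}, v_{e_a}, i_{e_b}, v_{e_b}). -/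
theorem aux_insert {α A : Type*} [Ring A] [Algebra ℂ A] (r : α → α → Prop) [DecidableRel r]
    (hr : ∀ a b c, r a b → r b c → r a c)
    (g : α → A) (S : α → α → ℂ) (h : ∀ a c, g a * g c = S a c • (g c * g a)) (a : α) (l : List α)
    (hl : l.Pairwise r) :
    g a * (l.map g).prod = (l.map (fun c => if r a c then 1 else S a c)).prod •
      ((l.orderedInsert r a).map g).prod := by
  induction l with
  | nil => simp
  | cons c l ih =>
    rw [List.pairwise_cons] at hl
    by_cases hac : r a c
    · have : ∀ d ∈ l, (if r a d then (1:ℂ) else S a d) = 1 := fun d hd =>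
        if_pos (hr _ _ _ hac (hl.1 d hd))
      rw [List.orderedInsert_cons_of_le r l hac]
      simp only [List.map_cons, List.prod_cons, if_pos hac, List.map_congr_left this]
      simp
    · rw [List.orderedInsert_of_not_le r l hac]
      simp only [List.map_cons, List.prod_cons, if_neg hac]
      rw [← mul_assoc, h, smul_mul_assoc, mul_assoc, ih hl.2, mul_smul_comm, smul_smul]

/-- the sign picked up when sorting a list -/
def auxSgn {α : Type*} (T : α → α → ℂ) : List α → ℂ
  | [] => 1
  | a :: l => (l.map (T a)).prod * auxSgn T l

theorem aux_sort {α A : Type*} [Ring A] [Algebra ℂ A] (r : α → α → Prop) [DecidableRel r]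
    (hr : ∀ a b c, r a b → r b c → r a c) (ht : ∀ a b, r a b ∨ r b a)
    (g : α → A) (S : α → α → ℂ) (h : ∀ a c, g a * g c = S a c • (g c * g a)) (l : List α) :
    (l.map g).prod = auxSgn (fun a c => if r a c then 1 else S a c) l •
      ((l.insertionSort r).map g).prod := by
  haveI : Std.Total r := ⟨ht⟩
  haveI : IsTrans α r := ⟨hr⟩
  induction l with
  | nil => simp [auxSgn]
  | cons a l ih =>
    simp only [List.map_cons, List.prod_cons, List.insertionSort_cons, auxSgn]
    rw [ih, mul_smul_comm, aux_insert r hr g S h a _ (List.pairwise_insertionSort r l), smul_smul,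
      mul_comm]
    congr 2
    exact ((List.perm_insertionSort r l).map _).prod_eq

theorem aux_sgn_eq {α : Type*} [LinearOrder α] (T : α → α → ℂ) (l : List α)
    (hl : l.Pairwise (· < ·)) :
    auxSgn T l = ∏ a ∈ l.toFinset, ∏ c ∈ l.toFinset with a < c, T a c := by
  induction l with
  | nil => simp [auxSgn]
  | cons a l ih =>
    rw [List.pairwise_cons] at hl
    have hnd : l.Nodup := hl.2.imp (fun h => ne_of_lt h)
    have ha : a ∉ l.toFinset := by
      intro h
      exact lt_irrefl _ (hl.1 a (List.mem_toFinset.1 h))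
    rw [List.toFinset_cons, Finset.prod_insert ha, auxSgn, ih hl.2]
    congr 1
    · rw [← List.prod_toFinset _ hnd]
      apply Finset.prod_congr _ (fun _ _ => rfl)
      ext c
      simp only [List.mem_toFinset, Finset.mem_filter, Finset.mem_insert]
      constructor
      · intro h; exact ⟨Or.inr h, hl.1 c h⟩
      · rintro ⟨h | h, h'⟩
        · subst h; exact absurd h' (lt_irrefl _)
        · exact h
    · apply Finset.prod_congr rfl
      intro d hd
      apply Finset.prod_congr _ (fun _ _ => rfl)
      ext c
      simp only [List.mem_toFinset, Finset.mem_filter, Finset.mem_insert]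
      have := hl.1 d (List.mem_toFinset.1 hd)
      constructor
      · rintro ⟨h, h'⟩; exact ⟨Or.inr h, h'⟩
      · rintro ⟨h | h, h'⟩
        · subst h; exact absurd h' (not_lt.2 this.le)
        · exact ⟨h, h'⟩

/-- the order by first element of the pair -/
def auxR {n : ℕ} (f : Fin n → Fin n) (a c : Fin n) : Prop :=
  min a (f a) < min c (f c) ∨ (min a (f a) = min c (f c) ∧ a ≤ c)

theorem auxR_trans {n : ℕ} (f : Fin n → Fin n) (a b c : Fin n) (h : auxR f a b) (h' : auxR f b c) :
    auxR f a c := by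
  unfold auxR at *
  generalize min a (f a) = x at *
  generalize min b (f b) = y at *
  generalize min c (f c) = z at *
  omega

theorem auxR_total {n : ℕ} (f : Fin n → Fin n) (a b : Fin n) : auxR f a b ∨ auxR f b a := by
  unfold auxR at *
  generalize min a (f a) = x at *
  generalize min b (f b) = y at *
  omega

theorem auxR_antisymm {n : ℕ} (f : Fin n → Fin n) (a b : Fin n) (h : auxR f a b) (h' : auxR f b a) :
    a = b := by
  unfold auxR at *
  generalize min a (f a) = x at *
  generalize min b (f b) = y at *
  omega

/-- the sorted list -/
def auxL {n : ℕ} (f : Fin n → Fin n) : List (Fin n) :=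
  ((List.finRange n).filter (fun k => k < f k)).flatMap (fun k => [k, f k])

theorem auxL_mem {n : ℕ} (f : Fin n → Fin n) (hinv : Function.Involutive f)
    (hfix : ∀ k, f k ≠ k) (a : Fin n) : a ∈ auxL f := by
  simp only [auxL, List.mem_flatMap, List.mem_filter, List.mem_finRange, true_and,
    decide_eq_true_eq, List.mem_cons, List.not_mem_nil, or_false]
  rcases lt_or_gt_of_ne (hfix a) with h | h
  · exact ⟨f a, by rwa [hinv a], Or.inr (hinv a).symm⟩
  · exact ⟨a, h, Or.inl rfl⟩

theorem auxL_pw {n : ℕ} (f : Fin n → Fin n) (hinv : Function.Involutive f) :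
    (auxL f).Pairwise (fun a c => auxR f a c ∧ a ≠ c) := by
  rw [auxL, List.pairwise_flatMap]
  constructor
  · intro a ha
    have h : a < f a := by simpa using ha
    simp only [List.pairwise_cons, List.mem_cons, List.not_mem_nil, or_false, auxR]
    simp [hinv a, h.le, h.ne, min_comm]
  · have := (List.pairwise_lt_finRange n).filter (fun k => decide (k < f k))
    refine (List.Pairwise.and_mem.1 this).imp ?_
    rintro a c ⟨ha, hc, h⟩
    have ha : a < f a := by simpa using ha
    have hc : c < f c := by simpa using hc
    have e1 : min a (f a) = a := min_eq_left ha.le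
    have e2 : min c (f c) = c := min_eq_left hc.le
    have e3 : min (f a) a = a := min_eq_right ha.le
    have e4 : min (f c) c = c := min_eq_right hc.le
    have hne : f a ≠ c := by
      rintro rfl
      rw [hinv a] at hc
      exact absurd hc (not_lt.2 ha.le)
    have hne2 : f a ≠ f c := fun h' => h.ne (hinv.injective h')
    have hne3 : a ≠ f c := (h.trans hc).ne
    intro x hx y hy
    simp only [List.mem_cons, List.not_mem_nil, or_false] at hx hy
    rcases hx with rfl | rfl <;> rcases hy with rfl | rfl <;>
      simp [auxR, hinv _, e1, e2, e3, e4, h, hne, hne2, hne3, h.ne]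

theorem auxL_eq {n : ℕ} (f : Fin n → Fin n) (hinv : Function.Involutive f)
    (hfix : ∀ k, f k ≠ k) [DecidableRel (auxR f)] :
    (List.finRange n).insertionSort (auxR f) = auxL f := by
  haveI : Std.Total (auxR f) := ⟨auxR_total f⟩
  haveI : IsTrans _ (auxR f) := ⟨auxR_trans f⟩
  have hnd : (auxL f).Nodup := (auxL_pw f hinv).imp (fun h => h.2)
  have hp : (List.finRange n).Perm (auxL f) := by
    rw [List.perm_ext_iff_of_nodup (List.nodup_finRange n) hnd]
    intro a
    simp [auxL_mem f hinv hfix a]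
  exact List.Perm.eq_of_pairwise (fun a b _ _ => auxR_antisymm f a b)
    (List.pairwise_insertionSort _ _) ((auxL_pw f hinv).imp (fun h => h.1))
    ((List.perm_insertionSort _ _).trans hp)

theorem aux_prod_L {n : ℕ} {A : Type*} [Ring A] (f : Fin n → Fin n) (g : Fin n → A)
    (hg : ∀ k, g (f k) = g k) (l : List (Fin n)) :
    ((l.flatMap (fun k => [k, f k])).map g).prod = (l.map (fun k => g k ^ 2)).prod := by
  induction l with
  | nil => simp
  | cons a l ih =>
    rw [List.flatMap_cons, List.map_append, List.prod_append, ih]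
    simp [hg, pow_two]

theorem aux_cross {n : ℕ} (f : Fin n → Fin n) (hinv : Function.Involutive f)
    (hfix : ∀ k, f k ≠ k) [DecidableRel (auxR f)] (S : Fin n → Fin n → ℂ)
    (hsym : ∀ a c, S a c = S c a) (hf : ∀ a c, S (f a) c = S a c) (hsq : ∀ a c, S a c * S a c = 1)
    (P : Fin n → Fin n → Prop) [DecidableRel P] (hP : ∀ a c, P a c → S a c = 1) :
    (∏ a : Fin n, ∏ c ∈ Finset.univ with a < c, if auxR f a c then 1 else S a c)
      = ∏ kl ∈ Finset.univ.filter (fun kl : Fin n × Fin n =>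
            kl.1 < kl.2 ∧ kl.2 < f kl.1 ∧ f kl.1 < f kl.2 ∧ ¬ P kl.1 kl.2), S kl.1 kl.2 := by
  have key : ∀ a c : Fin n, (a < c ∧ ¬ auxR f a c) ↔ (a < c ∧ f c < a ∧ f c < f a) := by
    intro a c
    have := hfix a
    have := hfix c
    unfold auxR
    constructor
    · rintro ⟨h, h'⟩
      refine ⟨h, ?_⟩
      rw [not_or] at h'
      have h3 : min c (f c) < min a (f a) := by
        rcases lt_trichotomy (min a (f a)) (min c (f c)) with h4 | h4 | h4
        · exact absurd h4 h'.1
        · exact absurd ⟨h4, h.le⟩ h'.2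
        · exact h4
      simp only [lt_min_iff, min_lt_iff] at h3
      omega
    · rintro ⟨h, h', h''⟩
      refine ⟨h, ?_⟩
      have h3 : min c (f c) < min a (f a) := by
        simp only [lt_min_iff, min_lt_iff]
        omega
      rw [not_or]
      exact ⟨not_lt.2 h3.le, fun h4 => h3.ne' h4.1⟩
  have e1 : (∏ a : Fin n, ∏ c ∈ Finset.univ with a < c, if auxR f a c then 1 else S a c)
      = ∏ p ∈ Finset.univ.filter (fun p : Fin n × Fin n => p.1 < p.2 ∧ f p.2 < p.1 ∧ f p.2 < f p.1),
        S p.1 p.2 := by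
    rw [Finset.prod_filter, Fintype.prod_prod_type]
    apply Finset.prod_congr rfl
    intro a _
    rw [Finset.prod_filter]
    apply Finset.prod_congr rfl
    intro c _
    have hk := key a c
    by_cases h : a < c
    · by_cases h' : auxR f a c
      · rw [if_pos h, if_pos h', if_neg (fun h3 => (hk.2 h3).2 h')]
      · rw [if_pos h, if_neg h', if_pos (hk.1 ⟨h, h'⟩)]
    · rw [if_neg h, if_neg (fun h3 => h h3.1)]
  rw [e1, ← Finset.prod_filter_mul_prod_filter_not _ (fun p : Fin n × Fin n => f p.1 < p.2)]
  have e2 : ∏ p ∈ (Finset.univ.filter (fun p : Fin n × Fin n =>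
      p.1 < p.2 ∧ f p.2 < p.1 ∧ f p.2 < f p.1)).filter (fun p : Fin n × Fin n => f p.1 < p.2),
        S p.1 p.2 = 1 := by
    apply Finset.prod_involution (fun p _ => (f p.1, p.2))
    · intro p _
      simp only [hf, hsq]
    · intro p _ _ h
      exact hfix p.1 (congrArg Prod.fst h)
    · intro p hp
      simp only [Finset.mem_filter, Finset.mem_univ, true_and, hinv p.1] at hp ⊢
      tauto
    · intro p _
      simp [hinv p.1]
  have e3 : ∏ kl ∈ Finset.univ.filter (fun kl : Fin n × Fin n =>
            kl.1 < kl.2 ∧ kl.2 < f kl.1 ∧ f kl.1 < f kl.2 ∧ ¬ P kl.1 kl.2), S kl.1 kl.2 =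
      ∏ kl ∈ Finset.univ.filter (fun kl : Fin n × Fin n =>
            kl.1 < kl.2 ∧ kl.2 < f kl.1 ∧ f kl.1 < f kl.2), S kl.1 kl.2 := by
    apply Finset.prod_subset
    · intro p
      simp only [Finset.mem_filter, Finset.mem_univ, true_and]
      tauto
    · intro p hp hp'
      simp only [Finset.mem_filter, Finset.mem_univ, true_and] at hp hp'
      apply hP
      tauto
  rw [e2, e3, one_mul]
  apply Finset.prod_nbij' (fun p => (f p.2, p.1)) (fun p => (p.2, f p.1))
  · intro p hp
    simp only [Finset.mem_filter, Finset.mem_univ, true_and, hinv _] at hp ⊢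
    have : f p.1 ≠ p.2 := by
      intro h
      have := hinv p.1
      rw [h] at this
      omega
    omega
  · intro p hp
    simp only [Finset.mem_filter, Finset.mem_univ, true_and, hinv _] at hp ⊢
    omega
  · intro p _
    simp [hinv _]
  · intro p _
    simp [hinv _]
  · intro p _
    simp only [hf]
    exact hsym _ _

/-- In the setting of a unital complex `*`-algebra `A`, a unital linear
functional `φ`, self-adjoint elements `b i v` satisfying properties (1)–(3): if
`𝐯 = v₁…vₙ` is a word with `n = 2r` even, `𝒱 ∈ 𝒫₂(𝐯)` is any pair partition (encoded by a
fixed-point-free involution `f` of `Fin n` with `v (f k) = v k`; the pair of `k` is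
`(k, f k)` with `k < f k`), and `(i₁,…,iₙ)` is a tuple of indices of class `𝒱`, then
`φ(b_{i₁,v₁} ⋯ b_{iₙ,vₙ}) = ∏_{(a,b) ∈ I_Γ(𝒱)} s(i_{e_a}, v_{e_a}, i_{e_b}, v_{e_b})`,
where `I_Γ(𝒱)` consists of the crossings `k < l < f k < f l` with `v k, v l` non-adjacent. -/
theorem stmt_6 {V : Type*} [DecidableEq V] (Γ : SimpleGraph V) [DecidableRel Γ.Adj]
    {A : Type*} [Ring A] [Algebra ℂ A] [StarRing A] [StarModule ℂ A]
    (φ : A →ₗ[ℂ] ℂ) (hφ1 : φ 1 = 1)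
    (b : ℕ → V → A) (hsa : ∀ i w, star (b i w) = b i w)
    (h1 : ∀ (k : ℕ) (idx : Fin k → ℕ × V), Function.Injective idx →
        ∀ l : Fin k → ℕ,
          φ (List.ofFn fun j => b (idx j).1 (idx j).2 ^ l j).prod
            = ∏ j, φ (b (idx j).1 (idx j).2 ^ l j))
    (h2 : ∀ i w, φ (b i w) = 0) (h2' : ∀ i w, φ (b i w ^ 2) = 1)
    (s : ℕ → V → ℕ → V → ℂ)
    (hs : ∀ i w j u, s i w j u = 1 ∨ s i w j u = -1)
    (hsadj : ∀ i w j u, Γ.Adj w u → s i w j u = 1)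
    (h3 : ∀ i w j u, b i w * b j u = s i w j u • (b j u * b i w))
    {n r : ℕ} (hn : n = 2 * r) (v : Fin n → V)
    (f : Fin n → Fin n) (hinv : Function.Involutive f)
    (hfix : ∀ k, f k ≠ k) (hlet : ∀ k, v (f k) = v k)
    (i : Fin n → ℕ)
    (hclass : ∀ k l, (i k = i l ∧ v k = v l) ↔ (k = l ∨ f k = l)) :
    φ (List.ofFn fun k => b (i k) (v k)).prod
      = ∏ kl ∈ Finset.univ.filter (fun kl : Fin n × Fin n =>
            kl.1 < kl.2 ∧ kl.2 < f kl.1 ∧ f kl.1 < f kl.2 ∧ ¬ Γ.Adj (v kl.1) (v kl.2)),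
          s (i kl.1) (v kl.1) (i kl.2) (v kl.2) := by
  classical
  have hb2 : ∀ i w j u, (i, w) ≠ (j, u) → φ (b i w ^ 2 * b j u ^ 2) = 1 := by
    intro i w j u hne
    have := h1 2 ![(i, w), (j, u)] (by
      intro x y hxy
      fin_cases x <;> fin_cases y <;> simp_all) ![2, 2]
    simpa [List.ofFn_succ, Fin.prod_univ_two, h2'] using this
  have hsym : ∀ i w j u, s i w j u * s j u i w = 1 := by
    intro i w j u
    have e : b i w * b j u = (s i w j u * s j u i w) • (b i w * b j u) := by
      conv_lhs => rw [h3 i w j u, h3 j u i w, smul_smul]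
    by_cases hne : (i, w) = (j, u)
    · obtain ⟨rfl, rfl⟩ := Prod.mk.inj hne
      have := congrArg φ e
      rw [map_smul, ← pow_two, h2'] at this
      simpa using this.symm
    · have e' : b i w ^ 2 * b j u ^ 2
          = (s i w j u * s j u i w) • (b i w ^ 2 * b j u ^ 2) := by
        calc b i w ^ 2 * b j u ^ 2 = b i w * (b i w * b j u) * b j u := by
              simp only [pow_two, mul_assoc]
          _ = b i w * ((s i w j u * s j u i w) • (b i w * b j u)) * b j u := by rw [← e]
          _ = _ := by simp only [pow_two, mul_assoc, mul_smul_comm, smul_mul_assoc]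
      have := congrArg φ e'
      rw [map_smul, hb2 _ _ _ _ hne] at this
      simpa using this.symm
  have hsq : ∀ i w j u, s i w j u * s i w j u = 1 := by
    intro i w j u
    rcases hs i w j u with h | h <;> rw [h] <;> norm_num
  have hcomm : ∀ i w j u, s i w j u = s j u i w := by
    intro i w j u
    have h := hsym i w j u
    rcases hs i w j u with h' | h' <;> rcases hs j u i w with h'' | h'' <;>
      rw [h', h''] at h ⊢ <;> norm_num at h
  have hif : ∀ k, i (f k) = i k := fun k => (((hclass k (f k)).2 (Or.inr rfl)).1).symm
  have hprod : (List.ofFn fun k => b (i k) (v k)).prod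
      = ((List.finRange n).map (fun k => b (i k) (v k))).prod := by
    rw [List.ofFn_eq_map]
  rw [hprod, aux_sort (auxR f) (auxR_trans f) (auxR_total f) _
    (fun a c => s (i a) (v a) (i c) (v c)) (fun a c => h3 _ _ _ _), auxL_eq f hinv hfix, map_smul,
    aux_sgn_eq _ _ (List.pairwise_lt_finRange n), auxL,
    aux_prod_L f _ (fun k => by rw [hif, hlet]), List.toFinset_finRange,
    aux_cross f hinv hfix (fun a c => s (i a) (v a) (i c) (v c)) (fun _ _ => hcomm _ _ _ _)
      (fun a c => by simp only [hif, hlet]) (fun _ _ => hsq _ _ _ _)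
      (fun a c => Γ.Adj (v a) (v c)) (fun a c h => hsadj _ _ _ _ h)]
  set L := (List.finRange n).filter (fun k => decide (k < f k)) with hL
  have hnd : L.Nodup := (List.nodup_finRange n).filter _
  have hmem : ∀ a ∈ L, a < f a := fun a ha => by simpa [hL] using ha
  have hone : φ (L.map (fun k => b (i k) (v k) ^ 2)).prod = 1 := by
    have := h1 L.length (fun j => (i (L.get j), v (L.get j))) (by
      intro x y hxy
      obtain ⟨hx1, hx2⟩ := Prod.mk.inj hxy
      rcases (hclass _ _).1 ⟨hx1, hx2⟩ with h | h
      · exact (List.nodup_iff_injective_get.1 hnd) h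
      · have p := hmem _ (List.get_mem L x)
        have q := hmem _ (List.get_mem L y)
        rw [← h, hinv] at q
        exact absurd q (not_lt.2 (h ▸ p.le))) (fun _ => 2)
    simp only [h2', Finset.prod_const_one] at this
    rw [← this]
    congr 2
    conv_lhs => rw [← List.ofFn_get L, List.map_ofFn]
    rfl
  rw [hone, smul_eq_mul, mul_one]
end

section
/- The complex algebra 𝒜 is finite dimensional; more precisely, the images in 𝒜 of the ordered products x_A := ∏_{t∈A} x_t (the product taken in the fixed linear order), for A ranging over all subsets of S, form a ℂ-vector space basis of 𝒜, so that dim_ℂ 𝒜 = 2^{|S|}. -/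
/-- The defining relations of the algebra `𝒜`:
`x_t x_u = s(t,u) x_u x_t + 2 δ_{t,u} 1` for all `t, u ∈ S`. -/
inductive MixedCliffordRel {S : Type*} [DecidableEq S] (s : S → S → ℝ) :
    FreeAlgebra ℂ S → FreeAlgebra ℂ S → Prop
  | rel (t u : S) : MixedCliffordRel s
      (FreeAlgebra.ι ℂ t * FreeAlgebra.ι ℂ u)
      ((s t u : ℂ) • (FreeAlgebra.ι ℂ u * FreeAlgebra.ι ℂ t)
        + if t = u then (2 : FreeAlgebra ℂ S) else 0)

/-- `𝒜`: the quotient of the free `ℂ`-algebra on `S` by the two-sided ideal generated by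
the relations `x_t x_u − s(t,u) x_u x_t = 2 δ_{t,u}`. -/
abbrev MixedCliffordAlgebra {S : Type*} [DecidableEq S] (s : S → S → ℝ) :=
  RingQuot (MixedCliffordRel s)

/-- The image `x_t` in `𝒜` of a generator `t ∈ S`. -/
noncomputable def mixedCliffordGen {S : Type*} [DecidableEq S] (s : S → S → ℝ) (t : S) :
    MixedCliffordAlgebra s :=
  RingQuot.mkAlgHom ℂ (MixedCliffordRel s) (FreeAlgebra.ι ℂ t)

/-- For `A ⊆ S`, the ordered product `x_A := ∏_{t ∈ A} x_t`, the product taken in the fixed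
linear order of `S` (with `x_∅ = 1`). -/
noncomputable def mixedCliffordBasisElem {S : Type*} [LinearOrder S] (s : S → S → ℝ)
    (A : Finset S) : MixedCliffordAlgebra s :=
  ((A.sort (· ≤ ·)).map (mixedCliffordGen s)).prod

namespace MixedClifford

variable {S : Type*} [LinearOrder S]

lemma symmDiff_singleton_of_mem {B : Finset S} {t : S} (h : t ∈ B) :
    symmDiff B {t} = B.erase t := by
  ext x
  simp only [Finset.mem_symmDiff, Finset.mem_singleton, Finset.mem_erase]
  grind

lemma symmDiff_singleton_of_notMem {B : Finset S} {t : S} (h : t ∉ B) :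
    symmDiff B {t} = insert t B := by
  ext x
  simp only [Finset.mem_symmDiff, Finset.mem_singleton, Finset.mem_insert]
  grind

/-- local sign -/
noncomputable def eps (s : S → S → ℝ) (t a : S) : ℂ := if a < t then (s t a : ℂ) else 1

lemma eps_sq (s : S → S → ℝ) (hval : ∀ t u, s t u = 1 ∨ s t u = -1) (t a : S) :
    eps s t a * eps s t a = 1 := by
  unfold eps
  split_ifs
  · rcases hval t a with h | h <;> simp [h]
  · simp

/-- global sign -/
noncomputable def sgn (s : S → S → ℝ) (t : S) (B : Finset S) : ℂ := ∏ a ∈ B, eps s t a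

lemma sgn_sq (s : S → S → ℝ) (hval : ∀ t u, s t u = 1 ∨ s t u = -1) (t : S) (B : Finset S) :
    sgn s t B * sgn s t B = 1 := by
  unfold sgn
  rw [← Finset.prod_mul_distrib]
  exact Finset.prod_eq_one fun a _ => eps_sq s hval t a

lemma sgn_symmDiff (s : S → S → ℝ) (hval : ∀ t u, s t u = 1 ∨ s t u = -1) (u t : S)
    (B : Finset S) : sgn s u (symmDiff B {t}) = eps s u t * sgn s u B := by
  by_cases h : t ∈ B
  · rw [symmDiff_singleton_of_mem h]
    unfold sgn
    rw [← Finset.mul_prod_erase B _ h, ← mul_assoc, eps_sq s hval, one_mul]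
  · rw [symmDiff_singleton_of_notMem h]
    unfold sgn
    rw [Finset.prod_insert h]

/-- The operator by which `x_t` acts. -/
noncomputable def op (s : S → S → ℝ) (t : S) : Module.End ℂ (Finset S → ℂ) where
  toFun f := fun B => sgn s t B * f (symmDiff B {t})
  map_add' f g := by ext B; simp [mul_add]
  map_smul' c f := by ext B; simp; ring

lemma op_apply (s : S → S → ℝ) (t : S) (f : Finset S → ℂ) (B : Finset S) :
    op s t f B = sgn s t B * f (symmDiff B {t}) := rfl

lemma op_rel (s : S → S → ℝ) (hsym : ∀ t u, s t u = s u t)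
    (hval : ∀ t u, s t u = 1 ∨ s t u = -1) (hdiag : ∀ t, s t t = -1) (t u : S) :
    op s t * op s u = (s t u : ℂ) • (op s u * op s t)
      + if t = u then (2 : Module.End ℂ (Finset S → ℂ)) else 0 := by
  apply LinearMap.ext
  intro f
  funext B
  by_cases h : t = u
  · subst h
    have h1 : ((op s t * op s t) f) B = f B := by
      simp only [Module.End.mul_apply, op_apply, symmDiff_assoc, symmDiff_self]
      rw [sgn_symmDiff s hval]
      have h2 := sgn_sq s hval t B
      have h3 : eps s t t = 1 := by simp [eps]
      rw [h3, one_mul, ← mul_assoc, h2, symmDiff_bot, one_mul]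
    have h4 : ((2 : Module.End ℂ (Finset S → ℂ)) f) B = 2 * f B := by
      rw [← one_add_one_eq_two, LinearMap.add_apply]
      simp [Module.End.one_apply]; ring
    simp only [if_true, LinearMap.add_apply, LinearMap.smul_apply, Pi.add_apply, Pi.smul_apply,
      h1, h4, hdiag]
    simp; ring
  · simp only [if_neg h, add_zero, LinearMap.smul_apply, Pi.smul_apply, Module.End.mul_apply,
      op_apply, sgn_symmDiff s hval, symmDiff_assoc, symmDiff_comm {u} {t}, smul_eq_mul]
    have h5 : eps s u t = s t u * eps s t u := by
      have h6 : (s t u : ℂ) * s t u = 1 := by rcases hval t u with h | h <;> simp [h]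
      unfold eps
      rcases lt_or_gt_of_ne h with h' | h'
      · simp [h', h'.not_gt, hsym u t]
      · simp [h', h'.not_gt, h6]
    rw [h5]; ring

/-- The representation of the algebra. -/
noncomputable def rep (s : S → S → ℝ) (hsym : ∀ t u, s t u = s u t)
    (hval : ∀ t u, s t u = 1 ∨ s t u = -1) (hdiag : ∀ t, s t t = -1) :
    MixedCliffordAlgebra s →ₐ[ℂ] Module.End ℂ (Finset S → ℂ) :=
  RingQuot.liftAlgHom ℂ ⟨FreeAlgebra.lift ℂ (op s), by
    rintro _ _ ⟨t, u⟩
    have := op_rel s hsym hval hdiag t u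
    simp only [map_mul, map_add, map_smul, FreeAlgebra.lift_ι_apply, this]
    split_ifs
    · rw [map_ofNat (FreeAlgebra.lift ℂ (op s)) 2]
    · rw [map_zero]⟩

lemma rep_gen (s : S → S → ℝ) (hsym : ∀ t u, s t u = s u t)
    (hval : ∀ t u, s t u = 1 ∨ s t u = -1) (hdiag : ∀ t, s t t = -1) (t : S) :
    rep s hsym hval hdiag (mixedCliffordGen s t) = op s t := by
  simp [rep, mixedCliffordGen]

lemma gen_rel (s : S → S → ℝ) (t u : S) :
    mixedCliffordGen s t * mixedCliffordGen s u =
      (s t u : ℂ) • (mixedCliffordGen s u * mixedCliffordGen s t)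
        + if t = u then (2 : MixedCliffordAlgebra s) else 0 := by
  have := RingQuot.mkAlgHom_rel ℂ (MixedCliffordRel.rel (s := s) t u)
  simp only [map_mul, map_add, map_smul] at this
  unfold mixedCliffordGen
  rw [this]
  split_ifs
  · rw [map_ofNat (RingQuot.mkAlgHom ℂ (MixedCliffordRel s)) 2]
  · rw [map_zero]

lemma eq_one_aux {R : Type*} [Ring R] [Algebra ℂ R] (y : R) (h : y = (-1 : ℂ) • y + 2) :
    y = 1 := by
  have h2 : (2 : ℂ) • y = (2 : ℂ) • (1 : R) := by
    rw [two_smul, two_smul, one_add_one_eq_two]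
    nth_rewrite 1 [h]
    rw [neg_smul, one_smul]
    abel
  exact smul_right_injective _ (two_ne_zero : (2 : ℂ) ≠ 0) h2

lemma gen_sq (s : S → S → ℝ) (hdiag : ∀ t, s t t = -1) (t : S) :
    mixedCliffordGen s t * mixedCliffordGen s t = 1 := by
  have h := gen_rel s t t
  rw [hdiag, if_pos rfl] at h
  refine eq_one_aux _ ?_
  simpa only [Complex.ofReal_neg, Complex.ofReal_one] using h

lemma elem_empty (s : S → S → ℝ) : mixedCliffordBasisElem s ∅ = 1 := by
  simp [mixedCliffordBasisElem]

lemma elem_insert (s : S → S → ℝ) (a : S) (A : Finset S) (h : ∀ x ∈ A, a < x) :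
    mixedCliffordBasisElem s (insert a A) =
      mixedCliffordGen s a * mixedCliffordBasisElem s A := by
  unfold mixedCliffordBasisElem
  rw [Finset.sort_insert (r := (· ≤ ·)) (fun x hx => (h x hx).le) (fun ha => lt_irrefl _ (h a ha))]
  simp

lemma op_single (s : S → S → ℝ) (a : S) (A : Finset S) (h : ∀ x ∈ A, a < x) :
    op s a (Pi.single A 1) = Pi.single (insert a A) 1 := by
  have ha : a ∉ A := fun ha => lt_irrefl _ (h a ha)
  funext B
  rw [op_apply]
  by_cases hB : B = insert a A
  · subst hB
    have h1 : symmDiff (insert a A) {a} = A := by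
      rw [symmDiff_singleton_of_mem (Finset.mem_insert_self _ _), Finset.erase_insert ha]
    rw [h1, Pi.single_eq_same, Pi.single_eq_same, mul_one]
    apply Finset.prod_eq_one
    intro x hx
    rcases Finset.mem_insert.1 hx with rfl | hx
    · simp [eps]
    · simp [eps, (h x hx).not_gt]
  · rw [Pi.single_eq_of_ne hB, Pi.single_eq_of_ne, mul_zero]
    intro h1
    apply hB
    rw [← symmDiff_singleton_of_notMem ha, ← h1, symmDiff_assoc, symmDiff_self, symmDiff_bot]

lemma rep_elem (s : S → S → ℝ) (hsym : ∀ t u, s t u = s u t)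
    (hval : ∀ t u, s t u = 1 ∨ s t u = -1) (hdiag : ∀ t, s t t = -1) (A : Finset S) :
    rep s hsym hval hdiag (mixedCliffordBasisElem s A) (Pi.single ∅ 1) = Pi.single A 1 := by
  induction A using Finset.induction_on_min with
  | empty => rw [elem_empty, map_one, Module.End.one_apply]
  | insert a A h ih =>
    rw [elem_insert s a A h, map_mul, Module.End.mul_apply, ih, rep_gen, op_single s a A h]

lemma gen_mul_elem (s : S → S → ℝ) (hdiag : ∀ t, s t t = -1) (t : S) (A : Finset S) :
    ∃ c : ℂ, mixedCliffordGen s t * mixedCliffordBasisElem s A =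
      c • mixedCliffordBasisElem s (symmDiff A {t}) := by
  induction A using Finset.induction_on_min with
  | empty =>
    refine ⟨1, ?_⟩
    rw [symmDiff_singleton_of_notMem (Finset.notMem_empty t), elem_insert s t ∅ (by simp), one_smul]
  | insert a A h ih =>
    have ha : a ∉ A := fun ha => lt_irrefl _ (h a ha)
    rcases lt_trichotomy t a with hta | rfl | hta
    · have h1 : ∀ x ∈ insert a A, t < x := by
        intro x hx
        rcases Finset.mem_insert.1 hx with rfl | hx
        · exact hta
        · exact hta.trans (h x hx)
      refine ⟨1, ?_⟩
      rw [symmDiff_singleton_of_notMem (fun ht => lt_irrefl _ (h1 t ht)), elem_insert s t _ h1,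
        one_smul]
    · refine ⟨1, ?_⟩
      rw [symmDiff_singleton_of_mem (Finset.mem_insert_self _ _), Finset.erase_insert ha,
        elem_insert s t A h, ← mul_assoc, gen_sq s hdiag, one_mul, one_smul]
    · obtain ⟨c, hc⟩ := ih
      refine ⟨(s t a : ℂ) * c, ?_⟩
      have h2 : symmDiff (insert a A) {t} = insert a (symmDiff A {t}) := by
        ext x
        simp only [Finset.mem_symmDiff, Finset.mem_singleton, Finset.mem_insert]
        grind
      have h3 : ∀ x ∈ symmDiff A {t}, a < x := by
        intro x hx
        simp only [Finset.mem_symmDiff, Finset.mem_singleton] at hx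
        rcases hx with hx | hx
        · exact h x hx.1
        · exact hx.1 ▸ hta
      rw [h2, elem_insert s a _ h3, elem_insert s a A h, ← mul_assoc, gen_rel s t a,
        if_neg hta.ne', add_zero, smul_mul_assoc, mul_assoc, hc, mul_smul_comm, smul_smul]

lemma span_top (s : S → S → ℝ) (hdiag : ∀ t, s t t = -1) :
    Submodule.span ℂ (Set.range fun A : Finset S => mixedCliffordBasisElem s A) = ⊤ := by
  set M := Submodule.span ℂ (Set.range fun A : Finset S => mixedCliffordBasisElem s A) with hM
  have key : ∀ a : FreeAlgebra ℂ S, ∀ m ∈ M,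
      RingQuot.mkAlgHom ℂ (MixedCliffordRel s) a * m ∈ M := by
    intro a
    induction a using FreeAlgebra.induction with
    | grade0 r =>
      intro m hm
      rw [AlgHom.commutes, ← Algebra.smul_def]
      exact M.smul_mem _ hm
    | grade1 t =>
      intro m hm
      change mixedCliffordGen s t * m ∈ M
      induction hm using Submodule.span_induction with
      | mem x hx =>
        obtain ⟨A, rfl⟩ := hx
        obtain ⟨c, hc⟩ := gen_mul_elem s hdiag t A
        simp only [hc]
        exact M.smul_mem _ (Submodule.subset_span ⟨_, rfl⟩)
      | zero => rw [mul_zero]; exact M.zero_mem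
      | add x y _ _ hx hy => rw [mul_add]; exact M.add_mem hx hy
      | smul c x _ hx => rw [mul_smul_comm]; exact M.smul_mem _ hx
    | mul a b ha hb =>
      intro m hm
      rw [map_mul, mul_assoc]
      exact ha _ (hb _ hm)
    | add a b ha hb =>
      intro m hm
      rw [map_add, add_mul]
      exact M.add_mem (ha _ hm) (hb _ hm)
  rw [eq_top_iff]
  rintro x -
  obtain ⟨a, rfl⟩ := RingQuot.mkAlgHom_surjective ℂ (MixedCliffordRel s) x
  have := key a 1 (by rw [← elem_empty]; exact Submodule.subset_span ⟨∅, rfl⟩)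
  rwa [mul_one] at this

lemma linIndep [Fintype S] (s : S → S → ℝ) (hsym : ∀ t u, s t u = s u t)
    (hval : ∀ t u, s t u = 1 ∨ s t u = -1) (hdiag : ∀ t, s t t = -1) :
    LinearIndependent ℂ (fun A : Finset S => mixedCliffordBasisElem s A) := by
  apply LinearIndependent.of_comp
    ((LinearMap.applyₗ (Pi.single ∅ 1 : Finset S → ℂ)).comp (rep s hsym hval hdiag).toLinearMap)
  have : (⇑((LinearMap.applyₗ (Pi.single ∅ 1 : Finset S → ℂ)).comp
      (rep s hsym hval hdiag).toLinearMap) ∘ fun A : Finset S => mixedCliffordBasisElem s A)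
      = ⇑(Pi.basisFun ℂ (Finset S)) := by
    funext A
    rw [Pi.basisFun_apply]
    exact rep_elem s hsym hval hdiag A
  rw [this]
  exact (Pi.basisFun ℂ (Finset S)).linearIndependent

end MixedClifford

/-- Let `S` be a finite linearly ordered set and `s : S×S → {−1,1}` with
`s(t,u) = s(u,t)` and `s(t,t) = −1`.  The algebra `𝒜` is finite dimensional: the ordered
products `x_A`, `A ⊆ S`, form a `ℂ`-vector space basis of `𝒜`, so `dim_ℂ 𝒜 = 2^{|S|}`. -/
theorem stmt_12 {S : Type*} [Fintype S] [LinearOrder S]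
    (s : S → S → ℝ) (hsym : ∀ t u, s t u = s u t)
    (hval : ∀ t u, s t u = 1 ∨ s t u = -1) (hdiag : ∀ t, s t t = -1) :
    LinearIndependent ℂ (fun A : Finset S => mixedCliffordBasisElem s A) ∧
      Submodule.span ℂ (Set.range fun A : Finset S => mixedCliffordBasisElem s A) = ⊤ ∧
      Module.finrank ℂ (MixedCliffordAlgebra s) = 2 ^ Fintype.card S := by
  have h1 := MixedClifford.linIndep s hsym hval hdiag
  have h2 := MixedClifford.span_top s hdiag
  refine ⟨h1, h2, ?_⟩
  rw [Module.finrank_eq_card_basis (Module.Basis.mk h1 h2.ge), Fintype.card_finset]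
end

section
/- The linear functional φ : 𝒜 → ℂ determined by φ(x_A) = 1 if A = ∅ and φ(x_A) = 0 otherwise is a faithful tracial state on 𝒜: φ(1) = 1, φ(xy) = φ(yx) for all x, y ∈ 𝒜, and φ(x*x) ≥ 0 for all x ∈ 𝒜 with equality only for x = 0, where * is the unique antilinear antiautomorphism of 𝒜 with x_t* = x_t for all t ∈ S. Consequently ⟨x, y⟩ := φ(y*x) defines an inner product on 𝒜. -/
open ComplexOrder

namespace MCAux

variable {S : Type*} [LinearOrder S] {s : S → S → ℝ}

/-- Equality up to sign. -/
def E {R : Type*} [Ring R] (a b : R) : Prop := a = b ∨ a = -b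

lemma E.refl {R : Type*} [Ring R] (a : R) : E a a := Or.inl rfl

lemma E.trans {R : Type*} [Ring R] {a b c : R} (h : E a b) (k : E b c) : E a c := by
  rcases h with rfl | rfl <;> rcases k with rfl | rfl <;> simp [E]

lemma E.mul_left {R : Type*} [Ring R] {a b : R} (c : R) (h : E a b) : E (c * a) (c * b) := by
  rcases h with rfl | rfl <;> simp [E]

lemma E.mul_right {R : Type*} [Ring R] {a b : R} (c : R) (h : E a b) : E (a * c) (b * c) := by
  rcases h with rfl | rfl <;> simp [E]

lemma gen_rel (s : S → S → ℝ) (t u : S) : mixedCliffordGen s t * mixedCliffordGen s u =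
    (s t u : ℂ) • (mixedCliffordGen s u * mixedCliffordGen s t) + if t = u then 2 else 0 := by
  have h := RingQuot.mkAlgHom_rel ℂ (MixedCliffordRel.rel (s := s) t u)
  rw [map_mul, map_add, map_smul, map_mul] at h
  refine h.trans ?_
  congr 1
  split_ifs
  · exact map_ofNat _ 2
  · exact map_zero _

lemma gen_sq (hdiag : ∀ t, s t t = -1) (t : S) :
    mixedCliffordGen s t * mixedCliffordGen s t = 1 := by
  have h := gen_rel s t t
  rw [hdiag, if_pos rfl] at h
  have hn : ∀ z : MixedCliffordAlgebra s, ((-1 : ℝ) : ℂ) • z = -z := fun z => by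
    apply eq_neg_of_add_eq_zero_left
    have := add_smul ((-1 : ℝ) : ℂ) 1 z
    rw [one_smul] at this
    rw [← this]
    simp
  rw [hn] at h
  have h2 : (2 : ℂ) • (mixedCliffordGen s t * mixedCliffordGen s t) = (2 : ℂ) • 1 := by
    rw [two_smul, two_smul]
    nth_rewrite 1 [h]
    rw [one_add_one_eq_two]
    abel
  exact smul_right_injective _ (two_ne_zero : (2 : ℂ) ≠ 0) h2

lemma gen_swap (hval : ∀ t u, s t u = 1 ∨ s t u = -1) (t u : S) :
    E (mixedCliffordGen s t * mixedCliffordGen s u)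
      (mixedCliffordGen s u * mixedCliffordGen s t) := by
  by_cases h : t = u
  · subst h; exact E.refl _
  · have := gen_rel s t u
    rw [if_neg h, add_zero] at this
    rcases hval t u with k | k <;> rw [k] at this <;> simp at this
    · exact Or.inl this
    · exact Or.inr this

lemma perm_E (hval : ∀ t u, s t u = 1 ∨ s t u = -1) {l m : List S} (h : l.Perm m) :
    E (l.map (mixedCliffordGen s)).prod (m.map (mixedCliffordGen s)).prod := by
  induction h with
  | nil => exact E.refl _
  | cons x _ ih => simpa using ih.mul_left _
  | swap x y l =>
    simp only [List.map_cons, List.prod_cons, ← mul_assoc]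
    exact (gen_swap hval _ _).mul_right _
  | trans _ _ h1 h2 => exact h1.trans h2

lemma gen_mul (hval : ∀ t u, s t u = 1 ∨ s t u = -1) (hdiag : ∀ t, s t t = -1)
    (t : S) (A : Finset S) :
    E (mixedCliffordGen s t * mixedCliffordBasisElem s A)
      (mixedCliffordBasisElem s (symmDiff {t} A)) := by
  by_cases h : t ∈ A
  · have e : symmDiff {t} A = A.erase t := by
      ext x; simp only [Finset.mem_symmDiff, Finset.mem_singleton, Finset.mem_erase]; grind
    rw [e]
    have p : (A.sort (· ≤ ·)).Perm (t :: (A.erase t).sort (· ≤ ·)) := by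
      rw [List.perm_ext_iff_of_nodup (Finset.sort_nodup _ _) (by simp)]
      intro x; simp only [Finset.mem_sort, List.mem_cons, Finset.mem_erase]; grind
    have := (perm_E (s := s) hval p).mul_left (mixedCliffordGen s t)
    rw [List.map_cons, List.prod_cons, ← mul_assoc, gen_sq hdiag, one_mul] at this
    exact this
  · have e : symmDiff {t} A = insert t A := by
      ext x; simp only [Finset.mem_symmDiff, Finset.mem_singleton, Finset.mem_insert]; grind
    rw [e]
    have p : (t :: A.sort (· ≤ ·)).Perm ((insert t A).sort (· ≤ ·)) := by
      rw [List.perm_ext_iff_of_nodup (by simp [h]) (Finset.sort_nodup _ _)]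
      intro x; simp
    have := perm_E (s := s) hval p
    rw [List.map_cons, List.prod_cons] at this
    exact this

lemma list_mul (hval : ∀ t u, s t u = 1 ∨ s t u = -1) (hdiag : ∀ t, s t t = -1)
    (l : List S) (hl : l.Nodup) (B : Finset S) :
    E ((l.map (mixedCliffordGen s)).prod * mixedCliffordBasisElem s B)
      (mixedCliffordBasisElem s (symmDiff l.toFinset B)) := by
  induction l with
  | nil =>
    have e : symmDiff (∅ : Finset S) B = B := bot_symmDiff B
    simpa [e] using E.refl (mixedCliffordBasisElem s B)
  | cons t l ih =>
    rw [List.nodup_cons] at hl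
    have e : symmDiff (t :: l).toFinset B = symmDiff {t} (symmDiff l.toFinset B) := by
      rw [← symmDiff_assoc]
      congr 1
      ext x; simp only [List.mem_toFinset, Finset.mem_symmDiff, Finset.mem_singleton, List.mem_cons]
      grind
    rw [e, List.map_cons, List.prod_cons, mul_assoc]
    exact ((ih hl.2).mul_left _).trans (gen_mul hval hdiag _ _)

lemma basis_mul (hval : ∀ t u, s t u = 1 ∨ s t u = -1) (hdiag : ∀ t, s t t = -1)
    (A B : Finset S) :
    E (mixedCliffordBasisElem s A * mixedCliffordBasisElem s B)
      (mixedCliffordBasisElem s (symmDiff A B)) := by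
  have := list_mul hval hdiag (A.sort (· ≤ ·)) (Finset.sort_nodup _ _) B
  rwa [Finset.sort_toFinset] at this

lemma span_top (hval : ∀ t u, s t u = 1 ∨ s t u = -1) (hdiag : ∀ t, s t t = -1)
    (x : MixedCliffordAlgebra s) :
    x ∈ Submodule.span ℂ (Set.range (mixedCliffordBasisElem s)) := by
  obtain ⟨a, rfl⟩ := RingQuot.mkAlgHom_surjective ℂ (MixedCliffordRel s) x
  have key : ∀ y ∈ Submodule.span ℂ (Set.range (mixedCliffordBasisElem s)),
      RingQuot.mkAlgHom ℂ (MixedCliffordRel s) a * y ∈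
        Submodule.span ℂ (Set.range (mixedCliffordBasisElem s)) := by
    induction a using FreeAlgebra.induction with
    | grade0 r =>
      intro y hy
      rw [AlgHom.commutes, ← Algebra.smul_def]
      exact Submodule.smul_mem _ _ hy
    | grade1 t =>
      intro y hy
      change mixedCliffordGen s t * y ∈ _
      induction hy using Submodule.span_induction with
      | mem y h =>
        obtain ⟨A, rfl⟩ := h
        rcases gen_mul hval hdiag t A with h | h <;> rw [h]
        · exact Submodule.subset_span ⟨_, rfl⟩
        · exact Submodule.neg_mem _ (Submodule.subset_span ⟨_, rfl⟩)
      | zero => rw [mul_zero]; exact Submodule.zero_mem _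
      | add x y _ _ hx hy => rw [mul_add]; exact Submodule.add_mem _ hx hy
      | smul c x _ hx => rw [mul_smul_comm]; exact Submodule.smul_mem _ _ hx
    | mul a b ha hb =>
      intro y hy
      rw [map_mul, mul_assoc]
      exact ha _ (hb _ hy)
    | add a b ha hb =>
      intro y hy
      rw [map_add, add_mul]
      exact Submodule.add_mem _ (ha _ hy) (hb _ hy)
  have h1 : (1 : MixedCliffordAlgebra s) ∈
      Submodule.span ℂ (Set.range (mixedCliffordBasisElem s)) :=
    Submodule.subset_span ⟨∅, by simp [mixedCliffordBasisElem]⟩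
  simpa using key 1 h1

end MCAux

/-- Let `S` be a finite linearly ordered set and `s : S×S → {−1,1}` with
`s(t,u) = s(u,t)`, `s(t,t) = −1`.  The linear functional `φ : 𝒜 → ℂ` determined by
`φ(x_A) = δ_{A,∅}` is a faithful tracial state on `𝒜`: `φ(1) = 1`, `φ(xy) = φ(yx)`, and
`φ(x*x) ≥ 0` with equality only for `x = 0`, where `*` is the (unique) antilinear
antiautomorphism of `𝒜` fixing the generators `x_t`.  Consequently `⟨x,y⟩ := φ(y*x)` is an
inner product on `𝒜`. -/
theorem stmt_13 {S : Type*} [Fintype S] [LinearOrder S]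
    (s : S → S → ℝ) (hsym : ∀ t u, s t u = s u t)
    (hval : ∀ t u, s t u = 1 ∨ s t u = -1) (hdiag : ∀ t, s t t = -1)
    (φ : MixedCliffordAlgebra s →ₗ[ℂ] ℂ)
    (hφ : ∀ A : Finset S, φ (mixedCliffordBasisElem s A) = if A = ∅ then 1 else 0)
    (st : MixedCliffordAlgebra s →ₗ⋆[ℂ] MixedCliffordAlgebra s)
    (hst1 : st 1 = 1)
    (hstmul : ∀ x y, st (x * y) = st y * st x)
    (hstgen : ∀ t, st (mixedCliffordGen s t) = mixedCliffordGen s t) :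
    φ 1 = 1 ∧
      (∀ x y, φ (x * y) = φ (y * x)) ∧
      (∀ x, 0 ≤ φ (st x * x)) ∧
      (∀ x, φ (st x * x) = 0 → x = 0) := by
  classical
  have hone : mixedCliffordBasisElem s ∅ = 1 := by simp [mixedCliffordBasisElem]
  have hne : ∀ A B : Finset S, A ≠ B →
      φ (mixedCliffordBasisElem s A * mixedCliffordBasisElem s B) = 0 := by
    intro A B hAB
    have hd : symmDiff A B ≠ ∅ := by
      intro h; exact hAB (symmDiff_eq_bot.mp h)
    rcases MCAux.basis_mul hval hdiag A B with h | h <;> rw [h] <;> simp [hφ, hd]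
  have hstl : ∀ l : List S, st (l.map (mixedCliffordGen s)).prod =
      (l.reverse.map (mixedCliffordGen s)).prod := by
    intro l
    induction l with
    | nil => simpa using hst1
    | cons t l ih => simp [hstmul, hstgen, ih]
  have hstE : ∀ A : Finset S, MCAux.E (st (mixedCliffordBasisElem s A))
      (mixedCliffordBasisElem s A) := by
    intro A
    rw [mixedCliffordBasisElem, hstl]
    exact MCAux.perm_E hval (List.reverse_perm _)
  have hstsq : ∀ A : Finset S,
      st (mixedCliffordBasisElem s A) * mixedCliffordBasisElem s A = 1 := by
    intro A
    rw [mixedCliffordBasisElem]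
    generalize A.sort (· ≤ ·) = l
    induction l with
    | nil => simpa using hst1
    | cons t l ih =>
      rw [List.map_cons, List.prod_cons, hstmul, hstgen, mul_assoc,
        ← mul_assoc (mixedCliffordGen s t), MCAux.gen_sq hdiag, one_mul, ih]
  have hφ1 : φ 1 = 1 := by rw [← hone, hφ, if_pos rfl]
  have horth : ∀ A B : Finset S,
      φ (st (mixedCliffordBasisElem s A) * mixedCliffordBasisElem s B) =
        if A = B then 1 else 0 := by
    intro A B
    split_ifs with h
    · subst h; rw [hstsq, hφ1]
    · rcases hstE A with k | k <;> rw [k]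
      · exact hne A B h
      · refine (congrArg φ (neg_mul (mixedCliffordBasisElem s A)
          (mixedCliffordBasisElem s B))).trans ?_
        refine (LinearMap.map_neg φ _).trans ?_
        rw [hne A B h, neg_zero]
  have hexp : ∀ x : MixedCliffordAlgebra s, ∃ c : Finset S → ℂ,
      ∑ A, c A • mixedCliffordBasisElem s A = x := fun x =>
    (Submodule.mem_span_range_iff_exists_fun ℂ).1 (MCAux.span_top hval hdiag x)
  have hform : ∀ c : Finset S → ℂ,
      φ (st (∑ A, c A • mixedCliffordBasisElem s A) * ∑ A, c A • mixedCliffordBasisElem s A) =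
        ((∑ A, Complex.normSq (c A) : ℝ) : ℂ) := by
    intro c
    simp only [map_sum, LinearMap.map_smulₛₗ, Finset.sum_mul_sum, smul_mul_smul_comm, horth]
    simp [Complex.normSq_eq_conj_mul_self]
  refine ⟨hφ1, ?_, ?_, ?_⟩
  · intro x y
    obtain ⟨c, rfl⟩ := hexp x
    obtain ⟨d, rfl⟩ := hexp y
    rw [Finset.sum_mul_sum, Finset.sum_mul_sum, Finset.sum_comm]
    simp only [map_sum, smul_mul_smul_comm, map_smul]
    refine Finset.sum_congr rfl fun A _ => Finset.sum_congr rfl fun B _ => ?_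
    rw [mul_comm (c B)]
    by_cases h : A = B
    · rw [h]
    · rw [hne A B h, hne B A (Ne.symm h)]
  · intro x
    obtain ⟨c, rfl⟩ := hexp x
    rw [hform]
    exact_mod_cast Finset.sum_nonneg fun A _ => Complex.normSq_nonneg (c A)
  · intro x hx
    obtain ⟨c, rfl⟩ := hexp x
    rw [hform] at hx
    have hx' : ∑ A, Complex.normSq (c A) = 0 := by exact_mod_cast hx
    rw [Finset.sum_eq_zero_iff_of_nonneg fun A _ => Complex.normSq_nonneg (c A)] at hx'
    refine Finset.sum_eq_zero fun A hA => ?_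
    rw [Complex.normSq_eq_zero.1 (hx' A hA), zero_smul]
end
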